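/- arXiv:1502.06488 — 11 statements merged into one kernel-verified Lean document; each statement's English description precedes it below -/
import Mathlib

section
/- Let U : (0,∞) → (0,∞) be a measurable function and τ ∈ ℝ. Then U belongs to the class 𝓜 with index ρ_U = −τ if and only if both: (a) for every r < τ there exists x_a > 1 such that for all x ≥ x_a, lim_{t→∞} t^r · U(tx)/U(x) = 0; and (b) for every r > τ there exists x_b > 1 such that for all x ≥ x_b, lim_{t→∞} t^r · U(tx)/U(x) = ∞. -/
open Filter Real

/-!
For a fixed `x > 0` and all `t > 0`,
`t ^ r * (U (t * x) / U x) = c * ((t * x) ^ r * U (t * x))` with the positive constant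
`c = (x ^ r * U x)⁻¹`. As `t ↦ t * x` is an order automorphism of `ℝ`, the behaviour of the
left-hand side as `t → ∞` (convergence to `0`, or divergence to `∞`) is that of `y ^ r * U y`
as `y → ∞`, whatever `x` is (`tendsto_ratio_iff`). Conditions (a) and (b) therefore say that
`y ^ r * U y` tends to `0` for `r < τ` and to `∞` for `r > τ`; with `r = τ ∓ ε` this is the
definition of the class `𝓜` with index `-τ`.
-/

/-- The dilation by `x` and the normalization by `U x` do not affect limits in a filter `l` that
is insensitive to multiplication by positive constants. -/
lemma tendsto_ratio_iff {U : ℝ → ℝ} {l : Filter ℝ}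
    (hl : ∀ (c : ℝ) (f : ℝ → ℝ), 0 < c →
      (Tendsto (fun t => c * f t) atTop l ↔ Tendsto f atTop l))
    {x : ℝ} (hx : 0 < x) (hUx : 0 < U x) (r : ℝ) :
    Tendsto (fun t : ℝ => t ^ r * (U (t * x) / U x)) atTop l ↔
      Tendsto (fun y : ℝ => y ^ r * U y) atTop l := by
  have hxr : 0 < x ^ r := rpow_pos_of_pos hx r
  have hmap : map (fun t : ℝ => t * x) atTop = atTop := (OrderIso.mulRight₀ x hx).map_atTop
  have heq : (fun t : ℝ => t ^ r * (U (t * x) / U x)) =ᶠ[atTop]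
      fun t => (x ^ r * U x)⁻¹ * ((t * x) ^ r * U (t * x)) := by
    filter_upwards [eventually_gt_atTop 0] with t ht
    rw [mul_rpow ht.le hx.le]
    field_simp
  rw [tendsto_congr' heq, hl _ _ (by positivity)]
  conv_rhs => rw [← hmap, tendsto_map'_iff]
  rfl

lemma tendsto_const_mul_nhds_zero_iff (c : ℝ) (f : ℝ → ℝ) (hc : 0 < c) :
    Tendsto (fun t => c * f t) atTop (nhds 0) ↔ Tendsto f atTop (nhds 0) := by
  refine ⟨fun h => ?_, fun h => by simpa using h.const_mul c⟩
  simpa [hc.ne'] using h.const_mul c⁻¹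

lemma tendsto_div_rpow_iff (U : ℝ → ℝ) (l : Filter ℝ) {s r : ℝ} (hs : s = -r) :
    Tendsto (fun x : ℝ => U x / x ^ s) atTop l ↔
      Tendsto (fun y : ℝ => y ^ r * U y) atTop l := by
  refine tendsto_congr' ?_
  filter_upwards [eventually_gt_atTop 0] with t ht
  rw [hs, rpow_neg ht.le, div_inv_eq_mul, mul_comm]

/-- A measurable function `U`, positive on `(0,∞)`, belongs to the class `𝓜` with index
`ρ_U = -τ` iff (a) for every `r < τ` there is `x_a > 1` such that for all `x ≥ x_a`,
`t^r · U(tx)/U(x) → 0` as `t → ∞`, and (b) for every `r > τ` there is `x_b > 1` such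
that for all `x ≥ x_b`, `t^r · U(tx)/U(x) → ∞` as `t → ∞`. -/
theorem stmt_0 (U : ℝ → ℝ) (τ : ℝ) (hU : Measurable U) (hUpos : ∀ x > 0, 0 < U x) :
    (∀ ε > 0,
        Tendsto (fun x : ℝ => U x / x ^ (-τ + ε)) atTop (nhds 0) ∧
        Tendsto (fun x : ℝ => U x / x ^ (-τ - ε)) atTop atTop) ↔
    ((∀ r < τ, ∃ xa > (1 : ℝ), ∀ x ≥ xa,
        Tendsto (fun t : ℝ => t ^ r * (U (t * x) / U x)) atTop (nhds 0)) ∧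
     (∀ r > τ, ∃ xb > (1 : ℝ), ∀ x ≥ xb,
        Tendsto (fun t : ℝ => t ^ r * (U (t * x) / U x)) atTop atTop)) := by
  have hzero {x : ℝ} (hx : 0 < x) (r : ℝ) :=
    tendsto_ratio_iff tendsto_const_mul_nhds_zero_iff hx (hUpos x hx) r
  have htop {x : ℝ} (hx : 0 < x) (r : ℝ) :=
    tendsto_ratio_iff (fun _ _ hc => tendsto_const_mul_atTop_of_pos hc) hx (hUpos x hx) r
  constructor
  · intro h
    refine ⟨fun r hr => ⟨2, one_lt_two, fun x hx => ?_⟩,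
      fun r hr => ⟨2, one_lt_two, fun x hx => ?_⟩⟩
    · rw [hzero (two_pos.trans_le hx), ← tendsto_div_rpow_iff U _ (s := -τ + (τ - r)) (by ring)]
      exact (h _ (sub_pos.2 hr)).1
    · rw [htop (two_pos.trans_le hx), ← tendsto_div_rpow_iff U _ (s := -τ - (r - τ)) (by ring)]
      exact (h _ (sub_pos.2 hr)).2
  · rintro ⟨ha, hb⟩ ε hε
    obtain ⟨xa, hxa, ha⟩ := ha (τ - ε) (by linarith)
    obtain ⟨xb, hxb, hb⟩ := hb (τ + ε) (by linarith)
    rw [tendsto_div_rpow_iff U _ (r := τ - ε) (by ring),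
      tendsto_div_rpow_iff U _ (r := τ + ε) (by ring)]
    exact ⟨(hzero (one_pos.trans hxa) _).1 (ha xa le_rfl),
      (htop (one_pos.trans hxb) _).1 (hb xb le_rfl)⟩
end

section
/- Let U : (0,∞) → (0,∞) be a measurable function. Then U belongs to the class 𝓜_∞ if and only if for every r ∈ ℝ there exists x₀ > 1 such that for all x ≥ x₀, lim_{t→∞} t^r · U(tx)/U(x) = 0. -/
/-!
For fixed `x > 0` and all `t > 0`, `t ^ r * (U (t * x) / U x)` equals `U y / y ^ (-r)` at `y = t * x`,
up to the nonzero constant `x ^ (-r) / U x`. Since `t → ∞` iff `y → ∞`, the two limits are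
equivalent for every single `x`; taking `ρ = -r` gives both implications.
-/

open Filter Real

/-- A measurable function `U`, positive on `(0,∞)`, belongs to `𝓜_∞`
(i.e. `U(x)/x^ρ → 0` for every `ρ`) iff for every `r ∈ ℝ` there is `x₀ > 1`
such that for all `x ≥ x₀`, `t^r · U(tx)/U(x) → 0` as `t → ∞`. -/
theorem stmt_1 (U : ℝ → ℝ) (hU : Measurable U) (hUpos : ∀ x > 0, 0 < U x) :
    (∀ ρ : ℝ, Tendsto (fun x : ℝ => U x / x ^ ρ) atTop (nhds 0)) ↔
    (∀ r : ℝ, ∃ x₀ > (1 : ℝ), ∀ x ≥ x₀,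
        Tendsto (fun t : ℝ => t ^ r * (U (t * x) / U x)) atTop (nhds 0)) := by
  constructor
  · intro h r
    refine ⟨2, by norm_num, fun x hx => ?_⟩
    have hx0 : 0 < x := by linarith
    have hUx := (hUpos x hx0).ne'
    -- With `ρ = -r` and `y = t * x`, the two expressions differ by a factor depending only on `x`.
    have h1 := (((h (-r)).comp (tendsto_id.atTop_mul_const hx0)).mul_const (x ^ (-r) / U x))
    rw [zero_mul] at h1
    refine h1.congr' ?_
    filter_upwards [eventually_gt_atTop 0] with t ht
    have := (rpow_pos_of_pos hx0 r).ne'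
    have := (rpow_pos_of_pos ht r).ne'
    simp only [Function.comp, id]
    rw [mul_rpow ht.le hx0.le, rpow_neg ht.le, rpow_neg hx0.le]
    field_simp
  · intro h ρ
    obtain ⟨x, hx1, hx⟩ := h (-ρ)
    have hx0 : 0 < x := by linarith
    have hUx := (hUpos x hx0).ne'
    -- A single base point `x` suffices: substitute `t = y / x`.
    have h1 := (((hx x le_rfl).comp (tendsto_id.atTop_div_const hx0)).mul_const (U x * x ^ (-ρ)))
    rw [zero_mul] at h1
    refine h1.congr' ?_
    filter_upwards [eventually_gt_atTop 0] with y hy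
    have := (rpow_pos_of_pos hx0 ρ).ne'
    have := (rpow_pos_of_pos hy ρ).ne'
    simp only [Function.comp, id]
    rw [div_mul_cancel₀ y hx0.ne', div_rpow hy.le hx0.le, rpow_neg hy.le, rpow_neg hx0.le]
    field_simp
end

section
/- Let U : (0,∞) → (0,∞) be a measurable function. Then U belongs to the class 𝓜_{−∞} if and only if for every r ∈ ℝ there exists x₀ > 1 such that for all x ≥ x₀, lim_{t→∞} t^r · U(tx)/U(x) = ∞. -/
open Filter Real

/-- A measurable function `U`, positive on `(0,∞)`, belongs to `𝓜_{-∞}`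
(i.e. `U(x)/x^ρ → ∞` for every `ρ`) iff for every `r ∈ ℝ` there is `x₀ > 1`
such that for all `x ≥ x₀`, `t^r · U(tx)/U(x) → ∞` as `t → ∞`. -/
theorem stmt_2 (U : ℝ → ℝ) (hU : Measurable U) (hUpos : ∀ x > 0, 0 < U x) :
    (∀ ρ : ℝ, Tendsto (fun x : ℝ => U x / x ^ ρ) atTop atTop) ↔
    (∀ r : ℝ, ∃ x₀ > (1 : ℝ), ∀ x ≥ x₀,
        Tendsto (fun t : ℝ => t ^ r * (U (t * x) / U x)) atTop atTop) := by
  -- With `y = t * x`, the two functions differ by a positive factor depending only on `x`.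
  have key : ∀ r x t : ℝ, 0 < x → 0 < t →
      t ^ r * (U (t * x) / U x) = U (t * x) / (t * x) ^ (-r) * (x ^ (-r) / U x) := by
    intro r x t hx ht
    have hUx := hUpos x hx
    have hxr := rpow_pos_of_pos hx r
    have htr := rpow_pos_of_pos ht r
    rw [mul_rpow ht.le hx.le, rpow_neg ht.le, rpow_neg hx.le]
    field_simp
  constructor
  · intro h r
    refine ⟨2, by norm_num, fun x hx => ?_⟩
    have hx0 : 0 < x := by linarith
    have hc : 0 < x ^ (-r) / U x := div_pos (rpow_pos_of_pos hx0 _) (hUpos x hx0)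
    refine (((h (-r)).comp (tendsto_id.atTop_mul_const hx0)).atTop_mul_const hc).congr' ?_
    filter_upwards [eventually_gt_atTop 0] with t ht
    exact (key r x t hx0 ht).symm
  · intro h ρ
    obtain ⟨x, hx, hlim⟩ := h (-ρ)
    have hx0 : 0 < x := by linarith
    have hc : 0 < x ^ ρ / U x := div_pos (rpow_pos_of_pos hx0 _) (hUpos x hx0)
    refine (((hlim x le_rfl).comp
      (tendsto_id.atTop_div_const hx0)).atTop_div_const hc).congr' ?_
    filter_upwards [eventually_gt_atTop 0] with y hy
    have hk := key (-ρ) x (y / x) hx0 (div_pos hy hx0)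
    rw [neg_neg] at hk
    simp only [Function.comp_apply, id]
    rw [hk, div_mul_cancel₀ y hx0.ne', mul_div_cancel_right₀ _ hc.ne']
end

section
/- If U : (0,∞) → (0,∞) is a measurable regularly varying function with tail index ρ ∈ ℝ (that is, lim_{x→∞} U(tx)/U(x) = t^ρ for every t > 0), then U belongs to the class 𝓜 with index ρ_U = ρ. Consequently the class RV of regularly varying functions is contained in 𝓜. -/
open Filter Real

/-!
In logarithmic coordinates put `h y = log U(e^y) - ρ y`. Regular variation of `U` says that
`h (y + u) - h y → 0` as `y → ∞` for each fixed `u`, and the claim is that `h y = o(y)`, in the form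
`h y - ε y → -∞` for `h` and for `-h`.

The only analytic input is a weak form of the uniform convergence theorem
(`exists_increment_bound`): for large `x`, the increments `h (x + u) - h x` with `u ∈ [0, 1]` are
bounded by `1`. It follows from measurability, since along sequences pointwise convergence implies
convergence in measure on `[0, 2]`; two sets of small measure cannot cover `[1, 2]`, so some
intermediate point `x + v` is close in `h`-value to both `x` and `x + u`. Telescoping the unit
increments, which are eventually at most `ε / 2`, then shows that `h` grows at rate at most `ε / 2`
(`tendsto_sub_mul_atBot`).
-/

open MeasureTheory Set in
/-- Weak uniform convergence theorem for additively slowly varying measurable functions. -/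
lemma exists_increment_bound (h : ℝ → ℝ) (hm : Measurable h)
    (hs : ∀ u, Tendsto (fun x => h (x + u) - h x) atTop (nhds 0)) :
    ∃ X : ℝ, ∀ x ≥ X, ∀ u ∈ Icc (0 : ℝ) 1, |h (x + u) - h x| ≤ 1 := by
  by_contra! hcon
  choose x hx u hu hbad using fun n : ℕ => hcon n
  have hx_top : Tendsto x atTop atTop := tendsto_atTop_mono hx tendsto_natCast_atTop_atTop
  have hxu_top : Tendsto (fun n => x n + u n) atTop atTop :=
    tendsto_atTop_mono (fun n => by linarith [(hu n).1]) hx_top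
  -- Along any sequence tending to infinity, increments tend to zero in measure on `[0, 2]`.
  have key : ∀ y : ℕ → ℝ, Tendsto y atTop atTop →
      ∀ᶠ n in atTop, volume ({v | 1 / 2 ≤ |h (y n + v) - h (y n)|} ∩ Icc (0 : ℝ) 2)
        < ENNReal.ofReal (1 / 4) := by
    intro y hy
    have hmeas : ∀ n, Measurable fun v => h (y n + v) - h (y n) := fun n => by fun_prop
    have hlim : TendstoInMeasure (volume.restrict (Icc (0 : ℝ) 2))
        (fun n v => h (y n + v) - h (y n)) atTop (fun _ => (0 : ℝ)) :=
      tendstoInMeasure_of_tendsto_ae (fun n => (hmeas n).aestronglyMeasurable)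
        (ae_of_all _ fun v => (hs v).comp hy)
    rw [tendstoInMeasure_iff_norm] at hlim
    have h1 := (hlim (1 / 2) (by norm_num)).eventually_lt_const
      (u := ENNReal.ofReal (1 / 4)) (by simp)
    filter_upwards [h1] with n hn
    rw [Measure.restrict_apply' measurableSet_Icc] at hn
    simpa [Real.norm_eq_abs] using hn
  obtain ⟨n, hA, hB⟩ := ((key x hx_top).and (key _ hxu_top)).exists
  set A := {v | 1 / 2 ≤ |h (x n + v) - h (x n)|} ∩ Icc (0 : ℝ) 2
  set B := {v | 1 / 2 ≤ |h (x n + u n + v) - h (x n + u n)|} ∩ Icc (0 : ℝ) 2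
  have hcover : Icc (1 : ℝ) 2 ⊆ A ∪ (fun v => v + -u n) ⁻¹' B := by
    intro v hv
    obtain ⟨hu0, hu1⟩ := hu n
    obtain ⟨hv1, hv2⟩ := hv
    by_contra hnot
    simp only [mem_union, mem_preimage, not_or] at hnot
    have hA' : |h (x n + v) - h (x n)| < 1 / 2 := by
      by_contra! hc
      exact hnot.1 ⟨hc, by linarith, hv2⟩
    have hB' : |h (x n + v) - h (x n + u n)| < 1 / 2 := by
      by_contra! hc
      refine hnot.2 ⟨?_, by linarith, by linarith⟩
      have e : x n + u n + (v + -u n) = x n + v := by ring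
      simpa only [mem_ofPred_eq, e] using hc
    have hb := hbad n
    rw [abs_lt] at hA' hB'
    rw [lt_abs] at hb
    rcases hb with hb | hb <;> linarith [hA'.1, hA'.2, hB'.1, hB'.2]
  have hle := (measure_mono (μ := volume) hcover).trans (measure_union_le _ _)
  rw [measure_preimage_add_right, Real.volume_Icc] at hle
  have hlt := hle.trans_lt (ENNReal.add_lt_add hA hB)
  rw [← ENNReal.ofReal_add (by norm_num) (by norm_num),
    ENNReal.ofReal_lt_ofReal_iff (by norm_num)] at hlt
  norm_num at hlt

lemma tendsto_sub_mul_atBot (h : ℝ → ℝ) (hm : Measurable h)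
    (hs : ∀ u, Tendsto (fun x => h (x + u) - h x) atTop (nhds 0)) (ε : ℝ) (hε : 0 < ε) :
    Tendsto (fun x => h x - ε * x) atTop atBot := by
  obtain ⟨X, hX⟩ := exists_increment_bound h hm hs
  obtain ⟨Z, hZ⟩ := eventually_atTop.1 ((hs 1).eventually (gt_mem_nhds (half_pos hε)))
  set Y := max X Z
  have hstep : ∀ n : ℕ, h (Y + n) ≤ h Y + n * (ε / 2) := by
    intro n
    induction n with
    | zero => simp
    | succ k ih =>
      have h1 := hZ (Y + k) (by linarith [le_max_right X Z, k.cast_nonneg (α := ℝ)])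
      push_cast
      rw [← add_assoc]
      linarith
  have hbound : ∀ x ≥ Y, h x ≤ h Y + (x - Y) * (ε / 2) + 1 := by
    intro x hx
    have hf := Nat.floor_le (sub_nonneg.2 hx)
    have hl := Nat.lt_floor_add_one (x - Y)
    set n := ⌊x - Y⌋₊
    have hn : (0 : ℝ) ≤ n := by positivity
    have h1 := hX (Y + n) (by linarith [le_max_left X Z]) (x - Y - n)
      ⟨by linarith, by linarith⟩
    have e : Y + n + (x - Y - n) = x := by ring
    rw [e] at h1
    have h2 : n * (ε / 2) ≤ (x - Y) * (ε / 2) := by gcongr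
    linarith [le_abs_self (h x - h (Y + n)), hstep n]
  have hlin : Tendsto (fun x : ℝ => (h Y - Y * (ε / 2) + 1) + -(ε / 2) * x) atTop atBot :=
    tendsto_atBot_add_const_left _ _ (tendsto_id.const_mul_atTop_of_neg (by linarith))
  refine tendsto_atBot_mono' _ ?_ hlin
  filter_upwards [eventually_ge_atTop Y] with x hx
  linarith [hbound x hx]

/-- If `U` is measurable, positive on `(0,∞)`, and regularly varying with tail index `ρ`
(i.e. `U(tx)/U(x) → t^ρ` as `x → ∞`, for every `t > 0`), then `U ∈ 𝓜` with index
`ρ_U = ρ`: for every `ε > 0`, `U(x)/x^{ρ+ε} → 0` and `U(x)/x^{ρ-ε} → ∞`.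
Consequently `RV ⊆ 𝓜`. -/
theorem stmt_3 (U : ℝ → ℝ) (ρ : ℝ) (hU : Measurable U) (hUpos : ∀ x > 0, 0 < U x)
    (hRV : ∀ t > (0 : ℝ), Tendsto (fun x : ℝ => U (t * x) / U x) atTop (nhds (t ^ ρ))) :
    ∀ ε > 0,
      Tendsto (fun x : ℝ => U x / x ^ (ρ + ε)) atTop (nhds 0) ∧
      Tendsto (fun x : ℝ => U x / x ^ (ρ - ε)) atTop atTop := by
  intro ε hε
  set h : ℝ → ℝ := fun y => log (U (exp y)) - ρ * y with hdef
  have hm : Measurable h := by fun_prop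
  have hs : ∀ u, Tendsto (fun x => h (x + u) - h x) atTop (nhds 0) := by
    intro u
    have h1 := ((hRV (exp u) (exp_pos u)).comp tendsto_exp_atTop).log
      (rpow_pos_of_pos (exp_pos u) ρ).ne'
    rw [log_rpow (exp_pos u), log_exp] at h1
    have h2 := h1.sub_const (ρ * u)
    rw [sub_self] at h2
    refine h2.congr fun x => ?_
    have e : exp u * exp x = exp (x + u) := by rw [← exp_add, add_comm]
    simp only [Function.comp, hdef]
    rw [e, log_div (hUpos _ (exp_pos _)).ne' (hUpos _ (exp_pos _)).ne']
    ring
  have hs' : ∀ u, Tendsto (fun x => (fun y => -h y) (x + u) - (fun y => -h y) x) atTop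
      (nhds 0) := by
    intro u
    have h1 := (hs u).neg
    rw [neg_zero] at h1
    exact h1.congr fun x => by ring
  have hexp : ∀ x > 0, ∀ c : ℝ, exp (h (log x) - c * log x) = U x / x ^ (ρ + c) := by
    intro x hx c
    have e : h (log x) - c * log x = log (U x) - log x * (ρ + c) := by
      simp only [hdef, exp_log hx]
      ring
    rw [e, exp_sub, exp_log (hUpos x hx), rpow_def_of_pos hx]
  constructor
  · refine (tendsto_exp_atBot.comp
      ((tendsto_sub_mul_atBot h hm hs ε hε).comp tendsto_log_atTop)).congr' ?_
    filter_upwards [eventually_gt_atTop 0] with x hx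
    exact hexp x hx ε
  · have h1 := tendsto_neg_atBot_atTop.comp
      ((tendsto_sub_mul_atBot _ hm.neg hs' ε hε).comp tendsto_log_atTop)
    refine (tendsto_exp_atTop.comp h1).congr' ?_
    filter_upwards [eventually_gt_atTop 0] with x hx
    rw [sub_eq_add_neg, ← hexp x hx (-ε)]
    simp only [Function.comp, Pi.neg_apply]
    congr 1
    ring
end

section
/- Let μ be Lebesgue measure on ℝ, let A ⊆ ℝ be a Lebesgue measurable set of positive measure, and let (x_n)_{n∈ℕ} be a bounded sequence of real numbers. Then μ(A) ≤ μ(limsup_{n→∞} (x_n + A)), where limsup_{n→∞} (x_n + A) = ⋂_{N} ⋃_{n ≥ N} (x_n + A) and x_n + A denotes the translate {x_n + a : a ∈ A}. -/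
open Filter MeasureTheory Set

/-!
By inner regularity it suffices to bound `volume K` for compact `K ⊆ A`. The tails
`⋃ n ≥ N, (x n + K)` decrease in `N`, all lie in a fixed bounded interval because `x` is bounded,
and each contains a translate of `K`, so has measure at least `volume K`. Continuity from above
passes this bound to their intersection, which is contained in the limsup for `A`.
-/

/-- Let `μ` be Lebesgue measure on `ℝ`, `A` a measurable set of positive measure, and
`(x_n)` a bounded sequence of reals. Then `μ(A) ≤ μ(limsup_n (x_n + A))`, where
`limsup_n (x_n + A) = ⋂_N ⋃_{n ≥ N} (x_n + A)`. -/
theorem stmt_8 (A : Set ℝ) (hA : MeasurableSet A) (hApos : 0 < volume A)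
    (x : ℕ → ℝ) (hx : ∃ C : ℝ, ∀ n, |x n| ≤ C) :
    volume A ≤ volume (⋂ N : ℕ, ⋃ n : ℕ, ⋃ _ : N ≤ n, (fun a => x n + a) '' A) := by
  obtain ⟨C, hC⟩ := hx
  refine le_of_forall_lt fun r hr => ?_
  obtain ⟨K, hKA, hK, hrK⟩ := hA.exists_lt_isCompact hr
  refine hrK.trans_le ?_
  have hmono : Antitone fun N : ℕ => ⋃ n : ℕ, ⋃ _ : N ≤ n, (fun a => x n + a) '' K :=
    fun M N hMN => iUnion_mono fun n => iUnion_mono' fun h => ⟨hMN.trans h, Subset.rfl⟩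
  have hmeas : ∀ N : ℕ, NullMeasurableSet
      (⋃ n : ℕ, ⋃ _ : N ≤ n, (fun a => x n + a) '' K) volume := fun N =>
    (MeasurableSet.iUnion fun n => MeasurableSet.iUnion fun _ =>
      (hK.image (by fun_prop)).measurableSet).nullMeasurableSet
  have hfin : volume (⋃ n : ℕ, ⋃ _ : 0 ≤ n, (fun a => x n + a) '' K) ≠ ⊤ := by
    obtain ⟨R, hR⟩ := hK.isBounded.exists_norm_le
    refine ((measure_mono ?_).trans_lt
      (measure_Icc_lt_top (μ := volume) (a := -(C + R)) (b := C + R))).ne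
    refine iUnion_subset fun n => iUnion_subset fun _ => ?_
    rintro _ ⟨a, ha, rfl⟩
    exact abs_le.mp ((abs_add_le _ _).trans (add_le_add (hC n) (hR a ha)))
  calc volume K
      ≤ ⨅ N : ℕ, volume (⋃ n : ℕ, ⋃ _ : N ≤ n, (fun a => x n + a) '' K) := by
        refine le_iInf fun N => ?_
        have h : volume ((fun a => x N + a) '' K) = volume K := by
          rw [image_add_left, measure_preimage_add]
        rw [← h]
        exact measure_mono (subset_iUnion₂_of_subset N le_rfl Subset.rfl)
    _ = volume (⋂ N : ℕ, ⋃ n : ℕ, ⋃ _ : N ≤ n, (fun a => x n + a) '' K) :=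
        (hmono.measure_iInter hmeas ⟨0, hfin⟩).symm
    _ ≤ _ := measure_mono <| iInter_mono fun N => iUnion₂_mono fun n _ => image_mono hKA
end

section
/- Let U : (0,∞) → (0,∞) be a measurable function belonging to the class 𝓜 with index ρ_U = −τ and let r < τ. Then there exists x_a > 1 such that for all c, d with x_a ≤ c < d < ∞, lim_{t→∞} t^r · sup_{x∈[c,d]} U(tx)/U(x) = 0. -/
/-!
Put `ε = (τ - r) / 2`. Far out, `x ^ (-τ - ε) ≤ U x ≤ x ^ (-τ + ε)` (Potter-type bounds, directly
from membership in `𝓜`). Hence for `t ≥ 1` and `x ∈ [c, d]` beyond that point,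
`U (t x) / U x ≤ (t x) ^ (-τ + ε) / x ^ (-τ - ε) = t ^ (-τ + ε) * x ^ (2 ε)`, so the quantity in
question lies between `0` and `t ^ (-ε) * d ^ (2 ε)`, which tends to `0`.
-/

open Filter Real Set

/-- Let `U` be measurable, positive on `(0,∞)`, in `𝓜` with index `ρ_U = -τ`, and let
`r < τ`. Then there exists `x_a > 1` such that for all `c, d` with `x_a ≤ c < d < ∞`,
`t^r · sup_{x ∈ [c,d]} U(tx)/U(x) → 0` as `t → ∞`. -/
theorem stmt_9 (U : ℝ → ℝ) (τ r : ℝ) (hU : Measurable U) (hUpos : ∀ x > 0, 0 < U x)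
    (hM : ∀ ε > 0,
        Tendsto (fun x : ℝ => U x / x ^ (-τ + ε)) atTop (nhds 0) ∧
        Tendsto (fun x : ℝ => U x / x ^ (-τ - ε)) atTop atTop)
    (hr : r < τ) :
    ∃ xa > (1 : ℝ), ∀ c d : ℝ, xa ≤ c → c < d →
      Tendsto (fun t : ℝ => t ^ r * sSup ((fun x => U (t * x) / U x) '' Icc c d))
        atTop (nhds 0) := by
  obtain ⟨ε, hε, hrε⟩ : ∃ ε > 0, r = τ - 2 * ε := ⟨(τ - r) / 2, by linarith, by ring⟩
  obtain ⟨h0, hinf⟩ := hM ε hε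
  obtain ⟨A, hA⟩ := eventually_atTop.1
    ((h0.eventually (gt_mem_nhds one_pos)).and (hinf.eventually_ge_atTop 1))
  refine ⟨max A 2, lt_of_lt_of_le one_lt_two (le_max_right _ _), fun c d hc hcd => ?_⟩
  have hcA : A ≤ c := (le_max_left _ _).trans hc
  have hc2 : 2 ≤ c := (le_max_right _ _).trans hc
  have upper : ∀ x, 0 < x → A ≤ x → U x ≤ x ^ (-τ + ε) := fun x hx hAx => by
    have h := (hA x hAx).1
    rw [div_lt_one (rpow_pos_of_pos hx _)] at h
    exact h.le
  have lower : ∀ x, 0 < x → A ≤ x → x ^ (-τ - ε) ≤ U x := fun x hx hAx => by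
    have h := (hA x hAx).2
    rwa [one_le_div (rpow_pos_of_pos hx _)] at h
  have hlim : Tendsto (fun t : ℝ => t ^ (-ε) * d ^ (2 * ε)) atTop (nhds 0) := by
    simpa using (tendsto_rpow_neg_atTop hε).mul_const (d ^ (2 * ε))
  refine squeeze_zero' ?_ ?_ hlim
  · filter_upwards [eventually_ge_atTop 1] with t ht
    have ht0 : 0 < t := by linarith
    refine mul_nonneg (rpow_nonneg ht0.le _) (Real.sSup_nonneg ?_)
    rintro _ ⟨x, hx, rfl⟩
    have hx0 : 0 < x := by linarith [hx.1]
    exact (div_pos (hUpos _ (mul_pos ht0 hx0)) (hUpos x hx0)).le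
  · filter_upwards [eventually_ge_atTop 1] with t ht
    have ht0 : 0 < t := by linarith
    have hsup : sSup ((fun x => U (t * x) / U x) '' Icc c d) ≤ t ^ (-τ + ε) * d ^ (2 * ε) := by
      refine csSup_le ((nonempty_Icc.2 hcd.le).image _) ?_
      rintro _ ⟨x, hx, rfl⟩
      have hx0 : 0 < x := by linarith [hx.1]
      have hAx : A ≤ x := hcA.trans hx.1
      have hxt : x ≤ t * x := le_mul_of_one_le_left hx0.le ht
      calc U (t * x) / U x ≤ (t * x) ^ (-τ + ε) / x ^ (-τ - ε) :=
            div_le_div₀ (rpow_nonneg (by positivity) _)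
              (upper _ (by positivity) (hAx.trans hxt)) (rpow_pos_of_pos hx0 _) (lower x hx0 hAx)
        _ = t ^ (-τ + ε) * x ^ (2 * ε) := by
            rw [mul_rpow ht0.le hx0.le, mul_div_assoc, ← rpow_sub hx0]
            ring_nf
        _ ≤ t ^ (-τ + ε) * d ^ (2 * ε) :=
            mul_le_mul_of_nonneg_left (rpow_le_rpow hx0.le hx.2 (by linarith))
              (rpow_nonneg ht0.le _)
    calc t ^ r * sSup ((fun x => U (t * x) / U x) '' Icc c d)
        ≤ t ^ r * (t ^ (-τ + ε) * d ^ (2 * ε)) :=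
          mul_le_mul_of_nonneg_left hsup (rpow_nonneg ht0.le _)
      _ = t ^ (-ε) * d ^ (2 * ε) := by
          rw [← mul_assoc, ← rpow_add ht0, hrε]
          ring_nf
end

section
/- Let U : (0,∞) → (0,∞) be a measurable function belonging to the class 𝓜 with index ρ_U = −τ and let r > τ. Then there exists x_b > 1 such that for all c, d with x_b ≤ c < d < ∞, lim_{t→∞} t^r · inf_{x∈[c,d]} U(tx)/U(x) = ∞. -/
/-! With `ε = (r - τ) / 2`, membership in `𝓜` gives `U x ≤ x ^ (-τ + ε)` and
`x ^ (-τ - ε) ≤ U x` for all large `x`. The first bound fixes `x_b`. For `x ∈ [c, d]` and `t`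
large, dividing the second bound at `t * x` by the first at `x` yields
`U (t * x) / U x ≥ t ^ (-τ - ε) * x ^ (-2 * ε) ≥ t ^ (-τ - ε) * d ^ (-2 * ε)`, uniformly in `x`,
so the quantity in question is at least `t ^ ε * d ^ (-2 * ε)`, which tends to infinity. -/

open Filter Real Set

/-- Let `U` be measurable, positive on `(0,∞)`, in `𝓜` with index `ρ_U = -τ`, and let
`r > τ`. Then there exists `x_b > 1` such that for all `c, d` with `x_b ≤ c < d < ∞`,
`t^r · inf_{x ∈ [c,d]} U(tx)/U(x) → ∞` as `t → ∞`. -/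
theorem stmt_10 (U : ℝ → ℝ) (τ r : ℝ) (hU : Measurable U) (hUpos : ∀ x > 0, 0 < U x)
    (hM : ∀ ε > 0,
        Tendsto (fun x : ℝ => U x / x ^ (-τ + ε)) atTop (nhds 0) ∧
        Tendsto (fun x : ℝ => U x / x ^ (-τ - ε)) atTop atTop)
    (hr : τ < r) :
    ∃ xb > (1 : ℝ), ∀ c d : ℝ, xb ≤ c → c < d →
      Tendsto (fun t : ℝ => t ^ r * sInf ((fun x => U (t * x) / U x) '' Icc c d))
        atTop atTop := by
  obtain ⟨ε, hε, hrε⟩ : ∃ ε > 0, r = τ + 2 * ε := ⟨(r - τ) / 2, by linarith, by ring⟩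
  obtain ⟨hlim0, hlimTop⟩ := hM ε hε
  obtain ⟨x₁, hx₁⟩ := eventually_atTop.1 (hlim0.eventually (gt_mem_nhds one_pos))
  obtain ⟨x₂, hx₂⟩ := eventually_atTop.1 (hlimTop.eventually_ge_atTop 1)
  refine ⟨max x₁ 2, lt_of_lt_of_le one_lt_two (le_max_right _ _), fun c d hc hcd => ?_⟩
  have hc₁ : x₁ ≤ c := (le_max_left _ _).trans hc
  have hc₂ : 2 ≤ c := (le_max_right _ _).trans hc
  have hd : 0 < d := by linarith
  have hmain : Tendsto (fun t : ℝ => t ^ ε * d ^ (-2 * ε)) atTop atTop :=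
    (tendsto_rpow_atTop hε).atTop_mul_const (rpow_pos_of_pos hd _)
  refine tendsto_atTop_mono' _ ?_ hmain
  filter_upwards [eventually_ge_atTop x₂, eventually_ge_atTop 1] with t ht ht1
  have ht0 : 0 < t := by linarith
  have hinf : t ^ (-τ - ε) * d ^ (-2 * ε) ≤ sInf ((fun x => U (t * x) / U x) '' Icc c d) := by
    refine le_csInf ((nonempty_Icc.2 hcd.le).image _) ?_
    rintro _ ⟨x, ⟨hcx, hxd⟩, rfl⟩
    have hx0 : 0 < x := by linarith
    have htx : 0 < t * x := mul_pos ht0 hx0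
    have hupper : U x ≤ x ^ (-τ + ε) :=
      ((div_lt_one (rpow_pos_of_pos hx0 _)).1 (hx₁ x (hc₁.trans hcx))).le
    have hlower : (t * x) ^ (-τ - ε) ≤ U (t * x) :=
      (one_le_div (rpow_pos_of_pos htx _)).1 (hx₂ (t * x) (by nlinarith))
    rw [le_div_iff₀ (hUpos x hx0)]
    calc t ^ (-τ - ε) * d ^ (-2 * ε) * U x
        ≤ t ^ (-τ - ε) * x ^ (-2 * ε) * x ^ (-τ + ε) := by
          have hanti : d ^ (-2 * ε) ≤ x ^ (-2 * ε) :=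
            rpow_le_rpow_of_nonpos hx0 hxd (by linarith)
          have := (hUpos x hx0).le
          gcongr
      _ = (t * x) ^ (-τ - ε) := by
          rw [mul_assoc, ← rpow_add hx0, mul_rpow ht0.le hx0.le]
          ring_nf
      _ ≤ U (t * x) := hlower
  calc t ^ ε * d ^ (-2 * ε) = t ^ r * (t ^ (-τ - ε) * d ^ (-2 * ε)) := by
        rw [← mul_assoc, ← rpow_add ht0, hrε]
        ring_nf
    _ ≤ _ := by gcongr
end

section
/- Let U : (0,∞) → (0,∞) be a measurable function belonging to the class 𝓜_∞ such that for every s > 1 there exists M_s > 0 with U(x) ≥ M_s for all x ∈ [1, s]. Then for every r ∈ ℝ there exists x₀ > 1 such that for all c, d with x₀ ≤ c < d < ∞, lim_{t→∞} t^r · sup_{x∈[c,d]} U(tx)/U(x) = 0. -/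
open Filter Real Set

/-! Any `x₀ > 1` works. On `[c, d]` the denominator `U x` is at least a constant `M > 0`. For `a ≥ 0`,
membership in `𝓜_∞` gives `U y ≤ y ^ (-a)` for large `y`, so `U (t * x) ≤ t ^ (-a)` for all `x ≥ 1` and
large `t`. Hence `t ^ r` times the supremum is at most `t ^ (r - a) / M`, and `a = |r| + 1` makes the
exponent negative. -/

/-- Let `U` be measurable, positive on `(0,∞)`, in `𝓜_∞`, and such that for every
`s > 1` there exists `M_s > 0` with `U(x) ≥ M_s` for all `x ∈ [1, s]`. Then for every
`r ∈ ℝ` there exists `x₀ > 1` such that for all `c, d` with `x₀ ≤ c < d < ∞`,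
`t^r · sup_{x ∈ [c,d]} U(tx)/U(x) → 0` as `t → ∞`. -/
theorem stmt_11 (U : ℝ → ℝ) (hU : Measurable U) (hUpos : ∀ x > 0, 0 < U x)
    (hM : ∀ ρ : ℝ, Tendsto (fun x : ℝ => U x / x ^ ρ) atTop (nhds 0))
    (hlow : ∀ s > (1 : ℝ), ∃ Ms > (0 : ℝ), ∀ x ∈ Icc (1 : ℝ) s, Ms ≤ U x) :
    ∀ r : ℝ, ∃ x₀ > (1 : ℝ), ∀ c d : ℝ, x₀ ≤ c → c < d →
      Tendsto (fun t : ℝ => t ^ r * sSup ((fun x => U (t * x) / U x) '' Icc c d))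
        atTop (nhds 0) := by
  intro r
  refine ⟨2, by norm_num, fun c d hc hcd => ?_⟩
  obtain ⟨M, hMpos, hMle⟩ := hlow d (by linarith)
  set a : ℝ := |r| + 1 with ha
  have ha0 : 0 ≤ a := by positivity
  have har : 0 < a - r := by have := le_abs_self r; linarith
  obtain ⟨N, hN⟩ := eventually_atTop.1 ((hM (-a)).eventually (gt_mem_nhds one_pos))
  have hlim : Tendsto (fun t : ℝ => t ^ (-(a - r)) / M) atTop (nhds 0) := by
    simpa using (tendsto_rpow_neg_atTop har).div_const M
  refine squeeze_zero' ?_ ?_ hlim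
  · filter_upwards [eventually_gt_atTop 0] with t ht
    refine mul_nonneg (rpow_nonneg ht.le _) (Real.sSup_nonneg ?_)
    rintro _ ⟨x, hx, rfl⟩
    have hx0 : 0 < x := by linarith [hx.1]
    exact (div_pos (hUpos _ (mul_pos ht hx0)) (hUpos _ hx0)).le
  · filter_upwards [eventually_ge_atTop N, eventually_gt_atTop 0] with t htN ht
    have hsup : sSup ((fun x => U (t * x) / U x) '' Icc c d) ≤ t ^ (-a) / M := by
      refine csSup_le ((nonempty_Icc.2 hcd.le).image _) ?_
      rintro _ ⟨x, hx, rfl⟩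
      have hx1 : 1 ≤ x := by linarith [hx.1]
      have htx : t ≤ t * x := le_mul_of_one_le_right ht.le hx1
      have htx0 : 0 < t * x := ht.trans_le htx
      have h1 : U (t * x) ≤ (t * x) ^ (-a) := by
        have := hN (t * x) (htN.trans htx)
        rw [div_lt_one (rpow_pos_of_pos htx0 _)] at this
        exact this.le
      have h2 : (t * x) ^ (-a) ≤ t ^ (-a) :=
        rpow_le_rpow_of_nonpos ht htx (by linarith)
      exact div_le_div₀ (rpow_nonneg ht.le _) (h1.trans h2) hMpos (hMle x ⟨hx1, hx.2⟩)
    calc t ^ r * sSup ((fun x => U (t * x) / U x) '' Icc c d)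
        ≤ t ^ r * (t ^ (-a) / M) := mul_le_mul_of_nonneg_left hsup (rpow_nonneg ht.le _)
      _ = t ^ (-(a - r)) / M := by
        rw [← mul_div_assoc, ← rpow_add ht]
        congr 2
        ring
end

section
/- Let U : (0,∞) → (0,∞) be a measurable function belonging to the class 𝓜_{−∞} such that for every s > 1 there exists M_s > 0 with U(x) ≤ M_s for all x ∈ [1, s]. Then for every r ∈ ℝ there exists x₀ > 1 such that for all c, d with x₀ ≤ c < d < ∞, lim_{t→∞} t^r · inf_{x∈[c,d]} U(tx)/U(x) = ∞. -/
/-!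
Any `x₀ > 1` works. On `[c, d] ⊆ [1, d]` the denominator satisfies `U x ≤ M`. Membership in
`𝓜_{-∞}` with exponent `ρ = max (1 - r) 0` gives `U y ≥ y ^ ρ` for large `y`; since `x ≥ 1` and
`ρ ≥ 0`, this yields `U (t * x) ≥ t ^ ρ ≥ t ^ (1 - r)` uniformly in `x ∈ [c, d]` for large `t`.
Hence `t ^ r * inf ≥ t / M → ∞`.
-/

open Filter Real Set

/-- Let `U` be measurable, positive on `(0,∞)`, in `𝓜_{-∞}`, and such that for every
`s > 1` there exists `M_s > 0` with `U(x) ≤ M_s` for all `x ∈ [1, s]`. Then for every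
`r ∈ ℝ` there exists `x₀ > 1` such that for all `c, d` with `x₀ ≤ c < d < ∞`,
`t^r · inf_{x ∈ [c,d]} U(tx)/U(x) → ∞` as `t → ∞`. -/
theorem stmt_12 (U : ℝ → ℝ) (hU : Measurable U) (hUpos : ∀ x > 0, 0 < U x)
    (hM : ∀ ρ : ℝ, Tendsto (fun x : ℝ => U x / x ^ ρ) atTop atTop)
    (hupp : ∀ s > (1 : ℝ), ∃ Ms > (0 : ℝ), ∀ x ∈ Icc (1 : ℝ) s, U x ≤ Ms) :
    ∀ r : ℝ, ∃ x₀ > (1 : ℝ), ∀ c d : ℝ, x₀ ≤ c → c < d →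
      Tendsto (fun t : ℝ => t ^ r * sInf ((fun x => U (t * x) / U x) '' Icc c d))
        atTop atTop := by
  intro r
  refine ⟨2, by norm_num, fun c d hc hcd => ?_⟩
  obtain ⟨M, hMpos, hMb⟩ := hupp d (by linarith)
  obtain ⟨N, hN⟩ := eventually_atTop.1 ((hM (max (1 - r) 0)).eventually_ge_atTop 1)
  refine tendsto_atTop_mono' atTop ?_ (tendsto_id.atTop_div_const hMpos)
  filter_upwards [eventually_ge_atTop N, eventually_ge_atTop 1] with t htN ht1
  have ht0 : 0 < t := by linarith
  have key : t ^ (1 - r) / M ≤ sInf ((fun x => U (t * x) / U x) '' Icc c d) := by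
    apply le_csInf ((nonempty_Icc.2 hcd.le).image _)
    rintro _ ⟨x, hx, rfl⟩
    have hx1 : 1 ≤ x := by linarith [hx.1]
    have htx : t ≤ t * x := le_mul_of_one_le_right ht0.le hx1
    have hy0 : 0 < t * x := by linarith
    have hlow : t ^ (1 - r) ≤ U (t * x) := calc
      t ^ (1 - r) ≤ t ^ max (1 - r) 0 := rpow_le_rpow_of_exponent_le ht1 (le_max_left _ _)
      _ ≤ (t * x) ^ max (1 - r) 0 := rpow_le_rpow ht0.le htx (le_max_right _ _)
      _ ≤ U (t * x) := (one_le_div (rpow_pos_of_pos hy0 _)).1 (hN _ (htN.trans htx))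
    exact div_le_div₀ (hUpos _ hy0).le hlow (hUpos x (by linarith)) (hMb x ⟨hx1, hx.2⟩)
  calc id t / M = t ^ r * (t ^ (1 - r) / M) := by
        rw [← mul_div_assoc, ← rpow_add ht0]
        simp
    _ ≤ _ := mul_le_mul_of_nonneg_left key (rpow_nonneg ht0.le r)
end

section
/- Let U : (0,∞) → (0,∞) be a measurable function with lim_{x→∞} log(U(x))/log(x) = τ for some τ ∈ ℝ. Then there exist b > 1 and measurable functions α, β, δ with α(x)/log(x) → 0, β(x) → τ, and δ(x) → 1 as x → ∞, and a constant x₁ ≥ b, such that U(x) = exp(α(x) + δ(x) · ∫_b^x β(s)/s ds) for all x ≥ x₁. -/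
/-!
The constant choices `b = 2`, `β = τ`, `δ = 1` suffice: the integral is then
`τ * (log x - log 2)`, and `α x = log (U x) - τ * (log x - log 2)` makes the representation exact.
The hypothesis on `log (U x) / log x` is precisely what gives `α x / log x → 0`.
-/

open Filter Real

/-- If `U` is measurable, positive on `(0,∞)`, and `log(U(x))/log(x) → τ` as `x → ∞`,
then there exist `b > 1`, measurable functions `α, β, δ` with `α(x)/log(x) → 0`,
`β(x) → τ`, `δ(x) → 1`, and `x₁ ≥ b` such that
`U(x) = exp(α(x) + δ(x)·∫_b^x β(s)/s ds)` for all `x ≥ x₁`. -/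
theorem stmt_14 (U : ℝ → ℝ) (τ : ℝ) (hU : Measurable U) (hUpos : ∀ x > 0, 0 < U x)
    (hlim : Tendsto (fun x : ℝ => Real.log (U x) / Real.log x) atTop (nhds τ)) :
    ∃ b > (1 : ℝ), ∃ α β δ : ℝ → ℝ,
      Measurable α ∧ Measurable β ∧ Measurable δ ∧
      Tendsto (fun x : ℝ => α x / Real.log x) atTop (nhds 0) ∧
      Tendsto β atTop (nhds τ) ∧
      Tendsto δ atTop (nhds 1) ∧
      ∃ x₁ ≥ b, ∀ x ≥ x₁, U x = Real.exp (α x + δ x * ∫ s in b..x, β s / s) := by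
  -- `∫_2^x τ/s ds = τ * (log x - log 2)`, and `α` absorbs everything else.
  refine ⟨2, by norm_num, fun x => Real.log (U x) - τ * (Real.log x - Real.log 2),
    fun _ => τ, fun _ => 1, ?_, measurable_const, measurable_const, ?_,
    tendsto_const_nhds, tendsto_const_nhds, 2, le_rfl, ?_⟩
  · exact (Real.measurable_log.comp hU).sub
      ((Real.measurable_log.sub measurable_const).const_mul τ)
  · have h : Tendsto (fun x : ℝ => Real.log (U x) / Real.log x - τ
        + τ * Real.log 2 / Real.log x) atTop (nhds (τ - τ + 0)) :=
      (hlim.sub tendsto_const_nhds).add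
        (tendsto_const_nhds.div_atTop Real.tendsto_log_atTop)
    rw [sub_self, add_zero] at h
    refine h.congr' ?_
    filter_upwards [eventually_gt_atTop 1] with x hx
    have hlog : Real.log x ≠ 0 := (Real.log_pos hx).ne'
    field_simp
    ring
  · intro x hx
    have hx0 : 0 < x := by linarith
    have hint : ∫ s in (2 : ℝ)..x, τ / s = τ * (Real.log x - Real.log 2) := by
      simp only [div_eq_mul_inv]
      rw [intervalIntegral.integral_const_mul, integral_inv_of_pos two_pos hx0,
        Real.log_div hx0.ne' two_ne_zero]
    rw [hint, one_mul, sub_add_cancel, Real.exp_log (hUpos x hx0)]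
end

section
/- No measurable function U : (0,∞) → (0,∞) belongs simultaneously to the class 𝓜_{−∞} and to the class of O-regularly varying functions; that is, 𝓜_{−∞} ∩ O-RV = ∅. -/
/-!
Only the finiteness of the limsup at `t = 2` matters: it gives `U (2 * x) ≤ 2 ^ k * U x` for all
`x ≥ X` and some natural `k`. Iterating from `X ≥ 1`, `U (2 ^ n * X) ≤ (2 ^ n) ^ k * U X`, so
`U x / x ^ k` stays bounded by `U X` along `x = 2 ^ n * X → ∞`, which contradicts
`U x / x ^ k → ∞`.
-/

open Filter Real

/-- No measurable function `U`, positive on `(0,∞)`, belongs simultaneously to `𝓜_{-∞}`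
(i.e. `U(x)/x^ρ → ∞` for every `ρ`) and to the class O-RV (for every `t ≥ 1`,
`0 < liminf_{x→∞} U(tx)/U(x)` and `limsup_{x→∞} U(tx)/U(x) < ∞`, in `EReal`). -/
theorem stmt_18 (U : ℝ → ℝ) (hU : Measurable U) (hUpos : ∀ x > 0, 0 < U x)
    (hM : ∀ ρ : ℝ, Tendsto (fun x : ℝ => U x / x ^ ρ) atTop atTop) :
    ¬ (∀ t ≥ (1 : ℝ),
        (0 : EReal) < liminf (fun x : ℝ => ((U (t * x) / U x : ℝ) : EReal)) atTop ∧
        limsup (fun x : ℝ => ((U (t * x) / U x : ℝ) : EReal)) atTop < ⊤) := by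
  intro h
  obtain ⟨c, hc, -⟩ := EReal.lt_iff_exists_real_btwn.mp (h 2 (by norm_num)).2
  obtain ⟨X₀, hX₀⟩ := eventually_atTop.mp (eventually_lt_of_limsup_lt hc)
  obtain ⟨k, hk⟩ := pow_unbounded_of_one_lt c (by norm_num : (1 : ℝ) < 2)
  set X := max X₀ 1
  have hX1 : (1 : ℝ) ≤ X := le_max_right _ _
  have hdouble : ∀ x, X ≤ x → U (2 * x) ≤ 2 ^ k * U x := fun x hx => by
    have h1 : U (2 * x) / U x < c := by
      exact_mod_cast hX₀ x ((le_max_left _ _).trans hx)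
    exact (div_le_iff₀ (hUpos x (by linarith))).mp (h1.trans hk).le
  -- Iterating the doubling bound: `U x / x ^ k` does not grow along `x = 2 ^ n * X`.
  have hbound : ∀ n : ℕ, U (2 ^ n * X) ≤ (2 ^ n) ^ k * U X := by
    intro n
    induction n with
    | zero => simp
    | succ n ih =>
      have hn : X ≤ 2 ^ n * X :=
        le_mul_of_one_le_left (by linarith) (one_le_pow₀ (by norm_num))
      calc U (2 ^ (n + 1) * X) = U (2 * (2 ^ n * X)) := by ring_nf
        _ ≤ 2 ^ k * U (2 ^ n * X) := hdouble _ hn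
        _ ≤ 2 ^ k * ((2 ^ n) ^ k * U X) := by gcongr
        _ = (2 ^ (n + 1)) ^ k * U X := by rw [pow_succ, mul_pow]; ring
  have hseq : Tendsto (fun n : ℕ => (2 : ℝ) ^ n * X) atTop atTop :=
    (tendsto_pow_atTop_atTop_of_one_lt (by norm_num)).atTop_mul_const (by linarith)
  obtain ⟨n, hn⟩ := (((hM k).comp hseq).eventually_gt_atTop (U X)).exists
  have hXpos : 0 < X := by linarith
  simp only [Function.comp_apply, rpow_natCast] at hn
  rw [lt_div_iff₀ (by positivity), mul_pow] at hn
  have hUX := hUpos X hXpos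
  have hge : U X * (2 ^ n) ^ k ≤ U X * ((2 ^ n) ^ k * X ^ k) := by
    gcongr
    exact le_mul_of_one_le_right (by positivity) (one_le_pow₀ hX1)
  linarith [hbound n]
end
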